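/- Let X and Y be Banach spaces. Then the following are equivalent: (i) the pair (c₀(X), Y) has the BPBp for compact operators; (ii) there is a function η : (0,∞) → (0,∞) such that all the pairs (ℓ∞^m(X), Y), m ∈ ℕ, have the BPBp for compact operators with the function η. -/

import Mathlib

open MeasureTheory

noncomputable section

/-- A pair `(X, Y)` of normed spaces has the Bishop–Phelps–Bollobás property for compact
operators with the function `η`. -/
def BPBpCompactWith (𝕜 : Type*) [RCLike 𝕜] (X Y : Type*) [NormedAddCommGroup X]
    [NormedSpace 𝕜 X] [NormedAddCommGroup Y] [NormedSpace 𝕜 Y] (η : ℝ → ℝ) : Prop :=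
  ∀ ε : ℝ, 0 < ε → 0 < η ε ∧
    ∀ T : X →L[𝕜] Y, IsCompactOperator T → ‖T‖ = 1 →
      ∀ x₀ : X, ‖x₀‖ = 1 → 1 - η ε < ‖T x₀‖ →
        ∃ S : X →L[𝕜] Y, ∃ x₁ : X, IsCompactOperator S ∧ ‖S‖ = 1 ∧ ‖x₁‖ = 1 ∧
          ‖S x₁‖ = 1 ∧ ‖x₀ - x₁‖ < ε ∧ ‖S - T‖ < ε

/-- A pair `(X, Y)` has the Bishop–Phelps–Bollobás property for compact operators. -/
def BPBpCompact (𝕜 : Type*) [RCLike 𝕜] (X Y : Type*) [NormedAddCommGroup X]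
    [NormedSpace 𝕜 X] [NormedAddCommGroup Y] [NormedSpace 𝕜 Y] : Prop :=
  ∃ η : ℝ → ℝ, BPBpCompactWith 𝕜 X Y η

/-!
The coordinate truncations `P` of `c₀(X)` are M-projections, `‖z‖ = max ‖P z‖ ‖(1 - P) z‖`, with
range `ℓ∞^m(X)`, and they converge strongly to the identity.

From `c₀(X)` to `ℓ∞^m(X)`: if `S` is a contraction attaining its norm at `z` and
`‖(1 - P) z‖ ≤ 1 / 2`, then `z` is the midpoint of `P z` and `P z + 2 (1 - P) z`, both in the unit
ball, so `S` also attains its norm at `P z`.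

From `ℓ∞^m(X)` to `c₀(X)`: a functional satisfies `‖φ P‖ + ‖φ (1 - P)‖ ≤ ‖φ‖`, so strong
convergence of the truncations gives `‖φ (1 - P)‖ → 0`. On the relatively compact image of the unit
ball under a compact `T` weak and norm convergence agree, hence `T P → T` in norm, and a
norm-attaining approximation of the normalized operator `T P` is one of `T`.
-/

open Filter Set Topology
open scoped ZeroAtInfty

section Normed

variable {𝕜 Y ι : Type*} [RCLike 𝕜] [NormedAddCommGroup Y] [NormedSpace 𝕜 Y] {l : Filter ι}

theorem tendsto_of_forall_tendsto_dual_of_mem_isCompact {K : Set Y} (hK : IsCompact K)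
    {u : ι → Y} {y : Y} (hu : ∀ i, u i ∈ K)
    (hφ : ∀ φ : StrongDual 𝕜 Y, Tendsto (fun i ↦ φ (u i)) l (𝓝 (φ y))) :
    Tendsto u l (𝓝 y) := by
  refine hK.tendsto_nhds_of_unique_mapClusterPt (.of_forall hu) fun x _ hx ↦ ?_
  refine (SeparatingDual.eq_iff_forall_dual_eq (R := 𝕜)).2 fun φ ↦ ?_
  have hφx : MapClusterPt (φ x) l (φ ∘ u) := hx.continuousAt_comp φ.continuous.continuousAt
  have : NeBot (𝓝 (φ x) ⊓ 𝓝 (φ y)) := hφx.clusterPt.mono (hφ φ)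
  exact eq_of_nhds_neBot this

theorem exists_opNorm_le_two_mul_norm_apply {X : Type*} [NormedAddCommGroup X] [NormedSpace 𝕜 X]
    (T : X →L[𝕜] Y) : ∃ v, ‖v‖ ≤ 1 ∧ ‖T‖ ≤ 2 * ‖T v‖ := by
  rcases (norm_nonneg T).eq_or_lt' with hzero | hpos
  · exact ⟨0, by simp [hzero]⟩
  · obtain ⟨v, hv, hTv⟩ := T.exists_lt_apply_of_lt_opNorm (half_lt_self hpos)
    exact ⟨v, hv.le, ((div_lt_iff₀' two_pos).1 hTv).le⟩

variable (𝕜) in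
theorem tendsto_inv_norm_smul {u : ι → Y} {y : Y} (hu : Tendsto u l (𝓝 y)) (hy : ‖y‖ = 1) :
    Tendsto (fun i ↦ (‖u i‖⁻¹ : 𝕜) • u i) l (𝓝 y) := by
  have hnorm : Tendsto (fun i ↦ (‖u i‖ : 𝕜)) l (𝓝 1) := by
    simpa [hy, Function.comp_def] using ((RCLike.continuous_ofReal (K := 𝕜)).tendsto _).comp hu.norm
  simpa using (hnorm.inv₀ one_ne_zero).smul hu

end Normed

section MProjection

variable {𝕜 Z Y ι : Type*} [RCLike 𝕜] [NormedAddCommGroup Z] [NormedSpace 𝕜 Z]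
  [NormedAddCommGroup Y] [NormedSpace 𝕜 Y] {l : Filter ι}

theorem norm_add_eq_max_of_isMprojection {P : Z →L[𝕜] Z} (hP : IsMprojection Z P) (x y : Z) :
    ‖P x + (1 - P) y‖ = max ‖P x‖ ‖(1 - P) y‖ := by
  have hPP (z : Z) : P (P z) = P z := DFunLike.congr_fun hP.proj z
  rw [hP.Mnorm]
  simp [hPP]

theorem norm_apply_le_of_isMprojection {P : Z →L[𝕜] Z} (hP : IsMprojection Z P) (z : Z) :
    ‖P z‖ ≤ ‖z‖ :=
  (le_max_left _ _).trans_eq (hP.Mnorm z).symm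

theorem norm_one_sub_apply_le_of_isMprojection {P : Z →L[𝕜] Z} (hP : IsMprojection Z P) (z : Z) :
    ‖(1 - P) z‖ ≤ ‖z‖ :=
  (le_max_right _ _).trans_eq (hP.Mnorm z).symm

theorem norm_apply_add_norm_one_sub_apply_le {P : Z →L[𝕜] Z} (hP : IsMprojection Z P)
    (φ : StrongDual 𝕜 Z) {x y : Z} (hx : ‖x‖ ≤ 1) (hy : ‖y‖ ≤ 1) :
    ‖φ (P x)‖ + ‖φ ((1 - P) y)‖ ≤ ‖φ‖ := by
  obtain ⟨a, ha, hax⟩ := RCLike.exists_norm_eq_mul_self (φ (P x))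
  obtain ⟨b, hb, hby⟩ := RCLike.exists_norm_eq_mul_self (φ ((1 - P) y))
  have hball : ‖P (a • x) + (1 - P) (b • y)‖ ≤ 1 := by
    rw [norm_add_eq_max_of_isMprojection hP, map_smul, map_smul, norm_smul, norm_smul, ha, hb,
      one_mul, one_mul]
    exact max_le ((norm_apply_le_of_isMprojection hP x).trans hx)
      ((norm_one_sub_apply_le_of_isMprojection hP y).trans hy)
  have hφ : φ (P (a • x) + (1 - P) (b • y)) = ((‖φ (P x)‖ + ‖φ ((1 - P) y)‖ : ℝ) : 𝕜) := by
    simp only [map_add, map_smul, smul_eq_mul, hax, hby]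
  calc ‖φ (P x)‖ + ‖φ ((1 - P) y)‖ = ‖φ (P (a • x) + (1 - P) (b • y))‖ := by
        rw [hφ, RCLike.norm_of_nonneg (by positivity)]
    _ ≤ ‖φ‖ := φ.unit_le_opNorm _ hball

theorem norm_comp_add_norm_comp_one_sub_le {P : Z →L[𝕜] Z} (hP : IsMprojection Z P)
    (φ : StrongDual 𝕜 Z) : ‖φ ∘L P‖ + ‖φ ∘L (1 - P)‖ ≤ ‖φ‖ := by
  have hPx {x : Z} (hx : ‖x‖ = 1) : ‖φ ∘L (1 - P)‖ ≤ ‖φ‖ - ‖φ (P x)‖ := by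
    refine ContinuousLinearMap.opNorm_le_of_unit_norm ?_ fun y hy ↦ ?_
    · simpa using norm_apply_add_norm_one_sub_apply_le hP φ hx.le (y := 0) (by simp)
    · exact le_sub_iff_add_le'.2 (norm_apply_add_norm_one_sub_apply_le hP φ hx.le hy.le)
  have hφP : ‖φ ∘L P‖ ≤ ‖φ‖ - ‖φ ∘L (1 - P)‖ := by
    refine ContinuousLinearMap.opNorm_le_of_unit_norm ?_ fun x hx ↦ le_sub_comm.1 (hPx hx)
    refine sub_nonneg.2 (ContinuousLinearMap.opNorm_le_of_unit_norm (norm_nonneg _) fun y hy ↦ ?_)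
    simpa using norm_apply_add_norm_one_sub_apply_le hP φ (x := 0) (by simp) hy.le
  exact le_sub_iff_add_le.1 hφP

theorem tendsto_dual_comp_one_sub {P : ι → Z →L[𝕜] Z} (hP : ∀ i, IsMprojection Z (P i))
    (hlim : ∀ z, Tendsto (fun i ↦ P i z) l (𝓝 z)) (φ : StrongDual 𝕜 Z) :
    Tendsto (fun i ↦ φ ∘L (1 - P i)) l (𝓝 0) := by
  refine Metric.tendsto_nhds.2 fun δ hδ ↦ ?_
  obtain ⟨x, hx, hφx⟩ := φ.exists_lt_apply_of_lt_opNorm (sub_lt_self ‖φ‖ hδ)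
  have hφPx : Tendsto (fun i ↦ ‖φ (P i x)‖) l (𝓝 ‖φ x‖) :=
    ((φ.continuous.tendsto x).comp (hlim x)).norm
  filter_upwards [hφPx.eventually_const_lt hφx] with i hi
  have hle : ‖φ (P i x)‖ ≤ ‖φ ∘L P i‖ := (φ ∘L P i).unit_le_opNorm x hx.le
  rw [dist_zero_right]
  linarith [norm_comp_add_norm_comp_one_sub_le (hP i) φ]

theorem tendsto_comp_of_isCompactOperator {P : ι → Z →L[𝕜] Z} (hP : ∀ i, IsMprojection Z (P i))
    (hlim : ∀ z, Tendsto (fun i ↦ P i z) l (𝓝 z)) {T : Z →L[𝕜] Y} (hT : IsCompactOperator T) :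
    Tendsto (fun i ↦ T ∘L P i) l (𝓝 T) := by
  choose v hv hTv using fun i ↦ exists_opNorm_le_two_mul_norm_apply (T ∘L (1 - P i))
  obtain ⟨K, hK, hTK⟩ := IsCompactOperator.image_closedBall_subset_compact
    (f := (T : Z →ₗ[𝕜] Y)) hT 1
  have hmem (i : ι) : T ((1 - P i) (v i)) ∈ K := by
    refine hTK ⟨_, mem_closedBall_zero_iff.2 ?_, rfl⟩
    exact (norm_one_sub_apply_le_of_isMprojection (hP i) _).trans (hv i)
  have hweak (φ : StrongDual 𝕜 Y) :
      Tendsto (fun i ↦ φ (T ((1 - P i) (v i)))) l (𝓝 (φ 0)) := by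
    rw [map_zero]
    exact squeeze_zero_norm (fun i ↦ (φ ∘L T ∘L (1 - P i)).unit_le_opNorm _ (hv i))
      (tendsto_zero_iff_norm_tendsto_zero.1 (tendsto_dual_comp_one_sub hP hlim (φ ∘L T)))
  have hstrong : Tendsto (fun i ↦ 2 * ‖T ((1 - P i) (v i))‖) l (𝓝 0) := by
    simpa using
      (tendsto_of_forall_tendsto_dual_of_mem_isCompact hK hmem hweak).norm.const_mul 2
  refine tendsto_iff_norm_sub_tendsto_zero.2 (squeeze_zero (fun _ ↦ norm_nonneg _) ?_ hstrong)
  intro i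
  rw [norm_sub_rev]
  simpa [ContinuousLinearMap.comp_sub, ContinuousLinearMap.one_def] using hTv i

theorem norm_apply_mprojection_eq_one {P : Z →L[𝕜] Z} (hP : IsMprojection Z P) {S : Z →L[𝕜] Y}
    (hS : ‖S‖ ≤ 1) {z : Z} (hz : ‖z‖ ≤ 1) (hSz : ‖S z‖ = 1) (hPz : ‖(1 - P) z‖ ≤ 1 / 2) :
    ‖S (P z)‖ = 1 := by
  have hSle {w : Z} (hw : ‖w‖ ≤ 1) : ‖S w‖ ≤ 1 := (S.unit_le_opNorm w hw).trans hS
  have hPle : ‖P z‖ ≤ 1 := (norm_apply_le_of_isMprojection hP z).trans hz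
  have hreflect : ‖P z + (1 - P) ((2 : 𝕜) • z)‖ ≤ 1 := by
    rw [norm_add_eq_max_of_isMprojection hP, map_smul, norm_smul, RCLike.norm_ofNat]
    exact max_le hPle (by linarith)
  have hmid : (2 : 𝕜) • z = P z + (P z + (1 - P) ((2 : 𝕜) • z)) := by
    simp only [two_smul, sub_apply, one_apply_eq_self, map_add]
    abel
  refine le_antisymm (hSle hPle) ?_
  have htwo : 2 ≤ ‖S (P z)‖ + ‖S (P z + (1 - P) ((2 : 𝕜) • z))‖ :=
    calc (2 : ℝ) = ‖S ((2 : 𝕜) • z)‖ := by simp [norm_smul, hSz]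
      _ = ‖S (P z) + S (P z + (1 - P) ((2 : 𝕜) • z))‖ := by rw [← map_add, ← hmid]
      _ ≤ ‖S (P z)‖ + ‖S (P z + (1 - P) ((2 : 𝕜) • z))‖ := norm_add_le _ _
  linarith [hSle hreflect]

end MProjection

section NormAttaining

variable {𝕜 X Y : Type*} [RCLike 𝕜] [NormedAddCommGroup X] [NormedSpace 𝕜 X]
  [NormedAddCommGroup Y] [NormedSpace 𝕜 Y]

/-- The conclusion of the Bishop–Phelps–Bollobás property: `(T, x)` is `ε`-close to a pair
`(S, x')` in which the compact operator `S` of norm one attains its norm at the unit vector `x'`. -/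
def HasNormAttainingApprox (T : X →L[𝕜] Y) (x : X) (ε : ℝ) : Prop :=
  ∃ S : X →L[𝕜] Y, ∃ x' : X, IsCompactOperator S ∧ ‖S‖ = 1 ∧ ‖x'‖ = 1 ∧
    ‖S x'‖ = 1 ∧ ‖x - x'‖ < ε ∧ ‖S - T‖ < ε

theorem HasNormAttainingApprox.of_norm_sub_le {T T' : X →L[𝕜] Y} {x x' : X} {ε δ : ℝ}
    (h : HasNormAttainingApprox T x ε) (hx : ‖x' - x‖ ≤ δ) (hT : ‖T - T'‖ ≤ δ) :
    HasNormAttainingApprox T' x' (ε + δ) := by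
  obtain ⟨S, y, hS, hS1, hy1, hSy, hxy, hST⟩ := h
  refine ⟨S, y, hS, hS1, hy1, hSy, ?_, ?_⟩
  · linarith [norm_sub_le_norm_sub_add_norm_sub x' x y]
  · linarith [norm_sub_le_norm_sub_add_norm_sub S T T']

theorem HasNormAttainingApprox.mono {T : X →L[𝕜] Y} {x : X} {ε ε' : ℝ}
    (h : HasNormAttainingApprox T x ε) (hε : ε ≤ ε') : HasNormAttainingApprox T x ε' := by
  simpa using h.of_norm_sub_le (x' := x) (T' := T) (δ := ε' - ε) (by simpa) (by simpa)

theorem norm_eq_one_of_norm_apply_eq_one {S : X →L[𝕜] Y} {x : X} (hS : ‖S‖ ≤ 1) (hx : ‖x‖ ≤ 1)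
    (hSx : ‖S x‖ = 1) : ‖S‖ = 1 :=
  hS.antisymm (hSx ▸ S.unit_le_opNorm x hx)

end NormAttaining

/-- An isometric copy of `E` in `Z` that is an M-summand (or `ℓ∞`-summand), together with the
M-projection onto it regarded as a map `Z → E`. -/
structure MSummand (𝕜 E Z : Type*) [RCLike 𝕜] [NormedAddCommGroup E] [NormedSpace 𝕜 E]
    [NormedAddCommGroup Z] [NormedSpace 𝕜 Z] where
  incl : E →ₗᵢ[𝕜] Z
  proj : Z →L[𝕜] E
  proj_incl : ∀ x, proj (incl x) = x
  norm_eq_max : ∀ z, ‖z‖ = max ‖proj z‖ ‖z - incl (proj z)‖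

namespace MSummand

variable {𝕜 E Z Y : Type*} [RCLike 𝕜] [NormedAddCommGroup E] [NormedSpace 𝕜 E]
  [NormedAddCommGroup Z] [NormedSpace 𝕜 Z] [NormedAddCommGroup Y] [NormedSpace 𝕜 Y]
  (J : MSummand 𝕜 E Z)

/-- The M-projection of `Z` onto the copy of `E`, as an endomorphism of `Z`. -/
def projection : Z →L[𝕜] Z :=
  J.incl.toContinuousLinearMap ∘L J.proj

theorem projection_apply (z : Z) : J.projection z = J.incl (J.proj z) :=
  rfl

theorem one_sub_projection_incl (x : E) : (1 - J.projection) (J.incl x) = 0 := by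
  simp [projection_apply, J.proj_incl]

theorem isMprojection : IsMprojection Z J.projection where
  proj := by
    ext z
    simp [projection_apply, J.proj_incl]
  Mnorm z := by simpa [projection_apply] using J.norm_eq_max z

theorem norm_proj_apply_le (z : Z) : ‖J.proj z‖ ≤ ‖z‖ :=
  (le_max_left _ _).trans_eq (J.norm_eq_max z).symm

theorem norm_comp_proj_le (A : E →L[𝕜] Y) : ‖A ∘L J.proj‖ ≤ ‖A‖ :=
  ContinuousLinearMap.opNorm_le_bound _ (norm_nonneg A) fun z ↦
    A.le_opNorm_of_le (J.norm_proj_apply_le z)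

theorem norm_comp_incl_le (S : Z →L[𝕜] Y) : ‖S ∘L J.incl.toContinuousLinearMap‖ ≤ ‖S‖ :=
  ContinuousLinearMap.opNorm_le_bound _ (norm_nonneg S) fun x ↦
    S.le_opNorm_of_le (J.incl.norm_map x).le

theorem comp_proj_comp_incl (A : E →L[𝕜] Y) :
    (A ∘L J.proj) ∘L J.incl.toContinuousLinearMap = A := by
  ext x
  simp [J.proj_incl]

theorem norm_comp_proj (A : E →L[𝕜] Y) : ‖A ∘L J.proj‖ = ‖A‖ := by
  refine (J.norm_comp_proj_le A).antisymm ?_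
  simpa only [J.comp_proj_comp_incl] using J.norm_comp_incl_le (A ∘L J.proj)

theorem norm_proj_apply_of_norm_sub_lt {z : Z} (hz : ‖z - J.projection z‖ < ‖z‖) :
    ‖J.proj z‖ = ‖z‖ := by
  rcases max_choice ‖J.proj z‖ ‖z - J.projection z‖ with hmax | hmax
  · exact hmax ▸ (J.norm_eq_max z).symm
  · exact absurd (hmax ▸ J.norm_eq_max z) hz.ne'

theorem hasNormAttainingApprox_comp_proj {A : E →L[𝕜] Y} {x : E} {ε : ℝ}
    (h : HasNormAttainingApprox A x ε) : HasNormAttainingApprox (A ∘L J.proj) (J.incl x) ε := by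
  obtain ⟨S, y, hS, hS1, hy1, hSy, hxy, hSA⟩ := h
  refine ⟨S ∘L J.proj, J.incl y, hS.comp_clm _, by rwa [J.norm_comp_proj], by simpa, ?_, ?_, ?_⟩
  · simpa [J.proj_incl] using hSy
  · rwa [← map_sub, J.incl.norm_map]
  · rwa [← ContinuousLinearMap.sub_comp, J.norm_comp_proj]

theorem hasNormAttainingApprox_of_comp_proj {A : E →L[𝕜] Y} {x : E} {ε : ℝ} (hε : ε ≤ 1 / 2)
    (h : HasNormAttainingApprox (A ∘L J.proj) (J.incl x) ε) : HasNormAttainingApprox A x ε := by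
  obtain ⟨S, z, hS, hS1, hz1, hSz, hxz, hSA⟩ := h
  have htail : ‖(1 - J.projection) z‖ ≤ 1 / 2 :=
    calc ‖(1 - J.projection) z‖ = ‖(1 - J.projection) (J.incl x - z)‖ := by
          rw [map_sub, J.one_sub_projection_incl, zero_sub, norm_neg]
      _ ≤ ‖J.incl x - z‖ := norm_one_sub_apply_le_of_isMprojection J.isMprojection _
      _ ≤ 1 / 2 := (hxz.trans_le hε).le
  have hSproj : ‖(S ∘L J.incl.toContinuousLinearMap) (J.proj z)‖ = 1 :=
    norm_apply_mprojection_eq_one J.isMprojection hS1.le hz1.le hSz htail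
  have hSincl : ‖S ∘L J.incl.toContinuousLinearMap‖ ≤ 1 := (J.norm_comp_incl_le S).trans_eq hS1
  have hproj : ‖J.proj z‖ ≤ 1 := (J.norm_proj_apply_le z).trans_eq hz1
  refine ⟨S ∘L J.incl.toContinuousLinearMap, J.proj z, hS.comp_clm _,
    norm_eq_one_of_norm_apply_eq_one hSincl hproj hSproj, hproj.antisymm ?_, hSproj, ?_, ?_⟩
  · exact hSproj ▸ ContinuousLinearMap.le_of_opNorm_le _ hSincl _ |>.trans_eq (one_mul _)
  · rw [← J.proj_incl x, ← map_sub]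
    exact (J.norm_proj_apply_le _).trans_lt hxz
  · rw [← J.comp_proj_comp_incl A, ← ContinuousLinearMap.sub_comp]
    exact (J.norm_comp_incl_le _).trans_lt hSA

theorem bpbpCompactWith (J : MSummand 𝕜 E Z) {η : ℝ → ℝ} (h : BPBpCompactWith 𝕜 Z Y η) :
    BPBpCompactWith 𝕜 E Y (fun ε ↦ η (min ε (1 / 2))) := by
  intro ε hε
  obtain ⟨hη, hZ⟩ := h (min ε (1 / 2)) (by positivity)
  refine ⟨hη, fun T hT hT1 x hx hTx ↦ ?_⟩
  have happrox : HasNormAttainingApprox (T ∘L J.proj) (J.incl x) (min ε (1 / 2)) :=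
    hZ _ (hT.comp_clm _) (by rwa [J.norm_comp_proj]) _ (by simpa)
      (by rwa [ContinuousLinearMap.comp_apply, J.proj_incl])
  exact (J.hasNormAttainingApprox_of_comp_proj (min_le_right _ _) happrox).mono (min_le_left _ _)

end MSummand

section Approximation

variable {𝕜 Z Y ι : Type*} {E : ι → Type*} [RCLike 𝕜] [NormedAddCommGroup Z] [NormedSpace 𝕜 Z]
  [NormedAddCommGroup Y] [NormedSpace 𝕜 Y] [∀ i, NormedAddCommGroup (E i)]
  [∀ i, NormedSpace 𝕜 (E i)] {l : Filter ι} [l.NeBot] {J : ∀ i, MSummand 𝕜 (E i) Z}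

theorem bpbpCompactWith_of_tendsto_projection
    (hJ : ∀ z, Tendsto (fun i ↦ (J i).projection z) l (𝓝 z)) {η : ℝ → ℝ}
    (h : ∀ i, BPBpCompactWith 𝕜 (E i) Y η) : BPBpCompactWith 𝕜 Z Y (fun ε ↦ η (ε / 2)) := by
  intro ε hε
  have hη : 0 < η (ε / 2) := (h l.nonempty_of_neBot.some (ε / 2) (half_pos hε)).1
  refine ⟨hη, fun T hT hT1 x hx hTx ↦ ?_⟩
  let A (i : ι) : E i →L[𝕜] Y := T ∘L (J i).incl.toContinuousLinearMap
  let B (i : ι) : E i →L[𝕜] Y := (‖A i‖⁻¹ : 𝕜) • A i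
  have hA : Tendsto (fun i ↦ A i ∘L (J i).proj) l (𝓝 T) :=
    tendsto_comp_of_isCompactOperator (fun i ↦ (J i).isMprojection) hJ hT
  have hB : Tendsto (fun i ↦ B i ∘L (J i).proj) l (𝓝 T) := by
    simpa [B, (J _).norm_comp_proj] using tendsto_inv_norm_smul 𝕜 hA hT1
  have hBx : Tendsto (fun i ↦ ‖B i ((J i).proj x)‖) l (𝓝 ‖T x‖) :=
    (((continuous_eval_const x).tendsto T).comp hB).norm
  have hxJ : Tendsto (fun i ↦ ‖x - (J i).projection x‖) l (𝓝 0) := by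
    simpa using ((tendsto_const_nhds (x := x)).sub (hJ x)).norm
  have hBT : Tendsto (fun i ↦ ‖B i ∘L (J i).proj - T‖) l (𝓝 0) :=
    tendsto_iff_norm_sub_tendsto_zero.1 hB
  have hA1 : Tendsto (fun i ↦ ‖A i‖) l (𝓝 1) := by
    simpa only [(J _).norm_comp_proj, hT1] using hA.norm
  obtain ⟨i, hBxi, hxi, hxi1, hBTi, hAi⟩ := ((hBx.eventually_const_lt hTx).and <|
    (hxJ.eventually_le_const (half_pos hε)).and <| (hxJ.eventually_lt_const one_pos).and <|
    (hBT.eventually_le_const (half_pos hε)).and (hA1.eventually_const_lt one_pos)).exists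
  have hB1 : ‖B i‖ = 1 := norm_smul_inv_norm (norm_pos_iff.1 hAi)
  have hxproj : ‖(J i).proj x‖ = 1 := by
    rw [(J i).norm_proj_apply_of_norm_sub_lt (by rwa [hx]), hx]
  have happrox : HasNormAttainingApprox (B i) ((J i).proj x) (ε / 2) :=
    (h i (ε / 2) (half_pos hε)).2 (B i) ((hT.comp_clm _).smul _) hB1 _ hxproj hBxi
  have happroxT : HasNormAttainingApprox T x (ε / 2 + ε / 2) :=
    ((J i).hasNormAttainingApprox_comp_proj happrox).of_norm_sub_le hxi hBTi
  rwa [add_halves] at happroxT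

theorem bpbpCompact_iff_of_tendsto_projection
    (hJ : ∀ z, Tendsto (fun i ↦ (J i).projection z) l (𝓝 z)) :
    BPBpCompact 𝕜 Z Y ↔ ∃ η : ℝ → ℝ, ∀ i, BPBpCompactWith 𝕜 (E i) Y η :=
  ⟨fun ⟨_, h⟩ ↦ ⟨_, fun i ↦ (J i).bpbpCompactWith h⟩,
    fun ⟨_, h⟩ ↦ ⟨_, bpbpCompactWith_of_tendsto_projection hJ h⟩⟩

end Approximation

section ZeroAtInfty

variable {𝕜 X α κ : Type*} [RCLike 𝕜] [NormedAddCommGroup X] [NormedSpace 𝕜 X]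
  [TopologicalSpace α] [Fintype κ]

theorem zeroAtInfty_norm_le_iff {f : C₀(α, X)} {C : ℝ} (hC : 0 ≤ C) :
    ‖f‖ ≤ C ↔ ∀ a, ‖f a‖ ≤ C := by
  rw [← ZeroAtInftyContinuousMap.norm_toBCF_eq_norm, BoundedContinuousFunction.norm_le hC]
  rfl

theorem zeroAtInfty_norm_apply_le (f : C₀(α, X)) (a : α) : ‖f a‖ ≤ ‖f‖ :=
  (zeroAtInfty_norm_le_iff (norm_nonneg f)).1 le_rfl a

theorem piLp_top_norm_le_iff {x : PiLp ⊤ (fun _ : κ ↦ X)} {C : ℝ}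
    (hC : 0 ≤ C) : ‖x‖ ≤ C ↔ ∀ k, ‖x k‖ ≤ C := by
  rw [← PiLp.norm_ofLp, pi_norm_le_iff_of_nonneg hC]

variable (𝕜 X) in
/-- Restriction of functions vanishing at infinity to finitely many points. -/
def restrictPoints (e : κ → α) : C₀(α, X) →L[𝕜] PiLp ⊤ (fun _ : κ ↦ X) :=
  LinearMap.mkContinuous
    { toFun f := WithLp.toLp ⊤ (f ∘ e)
      map_add' _ _ := rfl
      map_smul' _ _ := rfl } 1
    fun f ↦ (piLp_top_norm_le_iff (by positivity)).2 fun k ↦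
      (zeroAtInfty_norm_apply_le f (e k)).trans_eq (one_mul _).symm

theorem restrictPoints_apply (e : κ → α) (f : C₀(α, X)) (k : κ) :
    restrictPoints 𝕜 X e f k = f (e k) :=
  rfl

variable [DiscreteTopology α]

/-- Extension by zero along `e`, as a function vanishing at infinity. -/
def zeroAtInftyExtend (e : κ ↪ α) (x : κ → X) : C₀(α, X) where
  toFun := Function.extend e x 0
  continuous_toFun := continuous_of_discreteTopology
  zero_at_infty' := by
    rw [cocompact_eq_cofinite]
    refine tendsto_const_nhds.congr' ?_
    filter_upwards [(finite_range e).compl_mem_cofinite] with a ha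
    exact (Function.extend_apply' x (0 : α → X) a ha).symm

theorem coe_zeroAtInftyExtend (e : κ ↪ α) (x : κ → X) :
    ⇑(zeroAtInftyExtend e x) = Function.extend e x 0 :=
  rfl

theorem zeroAtInftyExtend_apply (e : κ ↪ α) (x : κ → X) (k : κ) :
    zeroAtInftyExtend e x (e k) = x k :=
  e.injective.extend_apply x 0 k

theorem zeroAtInftyExtend_apply_of_notMem (e : κ ↪ α) (x : κ → X) {a : α} (ha : a ∉ range e) :
    zeroAtInftyExtend e x a = 0 :=
  Function.extend_apply' x (0 : α → X) a ha

theorem norm_zeroAtInftyExtend (e : κ ↪ α) (x : PiLp ⊤ (fun _ : κ ↦ X)) :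
    ‖zeroAtInftyExtend e x‖ = ‖x‖ := by
  refine le_antisymm ((zeroAtInfty_norm_le_iff (norm_nonneg x)).2 fun a ↦ ?_)
    ((piLp_top_norm_le_iff (norm_nonneg _)).2 fun k ↦ ?_)
  · by_cases ha : a ∈ range e
    · obtain ⟨k, rfl⟩ := ha
      rw [zeroAtInftyExtend_apply]
      exact PiLp.norm_apply_le x k
    · simp [zeroAtInftyExtend_apply_of_notMem e x ha]
  · rw [← zeroAtInftyExtend_apply e x k]
    exact zeroAtInfty_norm_apply_le _ _

variable (𝕜 X) in
/-- Extension by zero along `e`, as a linear isometry `ℓ∞(κ, X) → c₀(α, X)`. -/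
def zeroAtInftyExtendₗᵢ (e : κ ↪ α) : PiLp ⊤ (fun _ : κ ↦ X) →ₗᵢ[𝕜] C₀(α, X) where
  toFun x := zeroAtInftyExtend e x
  map_add' x y := DFunLike.coe_injective <| by
    simpa [coe_zeroAtInftyExtend] using Function.extend_add e x.ofLp y.ofLp 0 0
  map_smul' c x := DFunLike.coe_injective <| by
    simpa [coe_zeroAtInftyExtend] using Function.extend_smul c e x.ofLp 0
  norm_map' := norm_zeroAtInftyExtend e

theorem zeroAtInftyExtend_restrictPoints_apply (e : κ ↪ α) (f : C₀(α, X)) (a : α) :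
    zeroAtInftyExtend e (restrictPoints 𝕜 X e f) a = (range e).indicator f a := by
  by_cases ha : a ∈ range e
  · obtain ⟨k, rfl⟩ := ha
    simp [zeroAtInftyExtend_apply, restrictPoints_apply]
  · rw [zeroAtInftyExtend_apply_of_notMem e _ ha, indicator_of_notMem ha]

theorem norm_eq_max_restrictPoints (e : κ ↪ α) (f : C₀(α, X)) :
    ‖f‖ = max ‖restrictPoints 𝕜 X e f‖ ‖f - zeroAtInftyExtend e (restrictPoints 𝕜 X e f)‖ := by
  have hsub (a : α) :
      (f - zeroAtInftyExtend e (restrictPoints 𝕜 X e f)) a = (range e)ᶜ.indicator f a := by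
    rw [ZeroAtInftyContinuousMap.sub_apply, zeroAtInftyExtend_restrictPoints_apply,
      indicator_compl, Pi.sub_apply]
  apply le_antisymm
  · refine (zeroAtInfty_norm_le_iff (by positivity)).2 fun a ↦ ?_
    by_cases ha : a ∈ range e
    · obtain ⟨k, rfl⟩ := ha
      exact le_max_of_le_left (PiLp.norm_apply_le (restrictPoints 𝕜 X e f) k)
    · rw [← indicator_of_mem (s := (range e)ᶜ) ha f, ← hsub]
      exact le_max_of_le_right (zeroAtInfty_norm_apply_le _ a)
  · refine max_le ((piLp_top_norm_le_iff (norm_nonneg f)).2 fun k ↦ ?_)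
      ((zeroAtInfty_norm_le_iff (norm_nonneg f)).2 fun a ↦ ?_)
    · exact zeroAtInfty_norm_apply_le f (e k)
    · rw [hsub]
      exact (norm_indicator_le_norm_self f a).trans (zeroAtInfty_norm_apply_le f a)

variable (𝕜 X) in
/-- The M-summand `ℓ∞(κ, X)` of `c₀(α, X)` consisting of the functions supported in the range
of `e`. -/
def coordinateMSummand (e : κ ↪ α) : MSummand 𝕜 (PiLp ⊤ (fun _ : κ ↦ X)) C₀(α, X) where
  incl := zeroAtInftyExtendₗᵢ 𝕜 X e
  proj := restrictPoints 𝕜 X e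
  proj_incl x := PiLp.ext fun k ↦ zeroAtInftyExtend_apply e x k
  norm_eq_max := norm_eq_max_restrictPoints e

theorem coordinateMSummand_projection_apply (e : κ ↪ α) (f : C₀(α, X)) (a : α) :
    (coordinateMSummand 𝕜 X e).projection f a = (range e).indicator f a :=
  zeroAtInftyExtend_restrictPoints_apply e f a

theorem finite_setOf_le_norm_zeroAtInfty (f : C₀(α, X)) {δ : ℝ} (hδ : 0 < δ) :
    {a | δ ≤ ‖f a‖}.Finite := by
  have hf : Tendsto f cofinite (𝓝 0) := cocompact_eq_cofinite α ▸ f.zero_at_infty'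
  simpa using hf.norm.eventually_lt_const (by simpa)

end ZeroAtInfty

section Main

variable {𝕜 X Y α ι : Type*} {κ : ι → Type*} [RCLike 𝕜] [NormedAddCommGroup X] [NormedSpace 𝕜 X]
  [NormedAddCommGroup Y] [NormedSpace 𝕜 Y] [TopologicalSpace α] [DiscreteTopology α]
  [∀ i, Fintype (κ i)] {l : Filter ι} (e : ∀ i, κ i ↪ α)

theorem tendsto_coordinateMSummand_projection (he : ∀ a, ∀ᶠ i in l, a ∈ range (e i))
    (f : C₀(α, X)) :
    Tendsto (fun i ↦ (coordinateMSummand 𝕜 X (e i)).projection f) l (𝓝 f) := by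
  refine ZeroAtInftyContinuousMap.tendsto_iff_tendstoUniformly.2 ?_
  refine Metric.tendstoUniformly_iff.2 fun δ hδ ↦ ?_
  have hlarge : ∀ᶠ i in l, ∀ a ∈ {a | δ ≤ ‖f a‖}, a ∈ range (e i) :=
    (finite_setOf_le_norm_zeroAtInfty f hδ).eventually_all.2 fun a _ ↦ he a
  filter_upwards [hlarge] with i hi a
  rw [coordinateMSummand_projection_apply]
  by_cases ha : a ∈ range (e i)
  · simpa [indicator_of_mem ha] using hδ
  · simpa [indicator_of_notMem ha] using mt (hi a) ha

theorem bpbp_compact_c0X_iff_general [l.NeBot] (he : ∀ a, ∀ᶠ i in l, a ∈ range (e i)) :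
    BPBpCompact 𝕜 C₀(α, X) Y ↔
      ∃ η : ℝ → ℝ, ∀ i, BPBpCompactWith 𝕜 (PiLp ⊤ (fun _ : κ i ↦ X)) Y η :=
  bpbpCompact_iff_of_tendsto_projection (tendsto_coordinateMSummand_projection e he)

end Main

/-- Lemma 3.2: (c₀(X), Y) has the BPBp for compact operators iff the pairs (ℓ∞^m(X), Y)
have it with a common function η. -/
theorem bpbp_compact_c0X_iff {𝕜 : Type*} [RCLike 𝕜] {X Y : Type*}
    [NormedAddCommGroup X] [NormedSpace 𝕜 X] [CompleteSpace X]
    [NormedAddCommGroup Y] [NormedSpace 𝕜 Y] [CompleteSpace Y] :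
    BPBpCompact 𝕜 (ZeroAtInftyContinuousMap ℕ X) Y ↔
      ∃ η : ℝ → ℝ, ∀ m : ℕ, BPBpCompactWith 𝕜 (PiLp ⊤ (fun _ : Fin m => X)) Y η := by
  have hcover (n : ℕ) : ∀ᶠ m in atTop, n ∈ range (Fin.valEmbedding : Fin m ↪ ℕ) := by
    filter_upwards [eventually_gt_atTop n] with m hnm using ⟨⟨n, hnm⟩, rfl⟩
  exact bpbp_compact_c0X_iff_general (fun m : ℕ ↦ (Fin.valEmbedding : Fin m ↪ ℕ)) hcover
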